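/- Fourier transform of the Poisson-type integral: Let f ∈ 𝒮(ℝ^d; ℝ^d) be a Schwartz vector field, set F = (f, 0) : ℝ^d → ℝ^{d+1}, and let U(x,t) = (ℙ_t ∗ F)(x). Then for every t > 0 and every ξ ∈ ℝ^d with ξ ≠ 0: (i) for each j = 1, …, d, ℱ_x(U_j(·,t))(ξ) = e^{−2π|ξ|t} ℱ(f_j)(ξ) − 2π t e^{−2π|ξ|t} (ξ_j/|ξ|) ((ξ/|ξ|) · ℱ(f)(ξ)) |ξ|, i.e. ℱ_x(U_j(·,t))(ξ) = e^{−2π|ξ|t} ℱ(f_j)(ξ) − 2π t e^{−2π|ξ|t} ξ_j (ξ · ℱ(f)(ξ))/|ξ|; and (ii) ℱ_x(U_{d+1}(·,t))(ξ) = −2πi t e^{−2π|ξ|t} (ξ · ℱ(f)(ξ)). -/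

import Mathlib

open MeasureTheory Filter Set
open scoped ENNReal NNReal Topology

noncomputable section

abbrev Ed (d : ℕ) : Type := EuclideanSpace ℝ (Fin d)

/-- The surface measure `ω_d` of the unit sphere in `ℝ^{d+1}`. -/
def sphereVol (d : ℕ) : ℝ :=
  ((d : ℝ) + 1) * (volume (Metric.ball (0 : EuclideanSpace ℝ (Fin (d+1))) 1)).toReal

/-- The Poisson kernel `p_t(x)` for the upper half-space `ℝ^d × (0,∞)`. -/
def poissonKernelEd (d : ℕ) (t : ℝ) (x : Ed d) : ℝ :=
  (2 / sphereVol d) * t / (‖x‖ ^ 2 + t ^ 2) ^ (((d : ℝ) + 1) / 2)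

/-- The (componentwise) Poisson integral `u(x,t) = (p_t ∗ f)(x)` of a vector field. -/
def poissonInt (d m : ℕ) (f : Ed d → Ed m) (x : Ed d) (t : ℝ) : Ed m :=
  ∫ y, poissonKernelEd d t y • f (x - y)

/-- The vector `(x, t) ∈ ℝ^{d+1}`. -/
def snocVec (d : ℕ) (x : Ed d) (t : ℝ) : Fin (d + 1) → ℝ := Fin.snoc (fun i => x i) t

/-- The entries `𝔭_t^{jk}(x)` of the Poisson-type matrix kernel `ℙ_t`. -/
def pEntry (d : ℕ) (t : ℝ) (j k : Fin (d + 1)) (x : Ed d) : ℝ :=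
  (2 * ((d : ℝ) + 1) / sphereVol d) * t * snocVec d x t j *
    snocVec d x t k / (‖x‖ ^ 2 + t ^ 2) ^ (((d : ℝ) + 3) / 2)

/-- The Poisson-type integral `U(x,t) = (ℙ_t ∗ F)(x)`, the convolution taken in the sense of
matrix–vector multiplication. -/
def pConv (d : ℕ) (t : ℝ) (F : Ed d → Ed (d + 1)) (x : Ed d) : Ed (d + 1) :=
  (EuclideanSpace.equiv (Fin (d + 1)) ℝ).symm
    (fun i => ∫ y, ∑ j, pEntry d t i j y * F (x - y) j)

/-- The field `F = (f, 0) : ℝ^d → ℝ^{d+1}` obtained by appending a zero component. -/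
def appendZero (d : ℕ) (f : Ed d → Ed d) : Ed d → Ed (d + 1) :=
  fun y => (EuclideanSpace.equiv (Fin (d + 1)) ℝ).symm (Fin.snoc (fun i => f y i) 0)

/-- The Fourier transform `ℱ(g)(ξ) = ∫_{ℝ^d} e^{−2πi ξ·x} g(x) dx` of a real-valued function. -/
def ftR (d : ℕ) (g : Ed d → ℝ) (ξ : Ed d) : ℂ :=
  ∫ x, Complex.exp (((-2 * Real.pi * (inner ℝ ξ x : ℝ) : ℝ) : ℂ) * Complex.I) * (g x : ℂ)


lemma sphereVol_mul_Gamma (d : ℕ) :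
    sphereVol d * Real.Gamma (((d : ℝ) + 3) / 2) = ((d : ℝ) + 1) * (Real.pi ^ ((d : ℝ) / 2) * √Real.pi) := by
  have hG : 0 < Real.Gamma (((d : ℝ) + 3) / 2) := Real.Gamma_pos_of_pos (by positivity)
  have h1 : ((d + 1 : ℕ) : ℝ) / 2 + 1 = ((d : ℝ) + 3) / 2 := by push_cast; ring
  have h2 : √Real.pi ^ (d + 1) = Real.pi ^ ((d : ℝ) / 2) * √Real.pi := by
    rw [pow_succ, Real.sqrt_eq_rpow, ← Real.rpow_natCast, ← Real.rpow_mul Real.pi_pos.le]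
    congr 2; ring
  unfold sphereVol
  rw [EuclideanSpace.volume_ball]
  simp only [ENNReal.ofReal_one, one_pow, one_mul, Fintype.card_fin, h1, h2]
  rw [ENNReal.toReal_ofReal (by positivity)]
  field_simp

lemma phi_deriv (t a u : ℝ) (hu : 0 < u) :
    HasDerivAt (fun u => t * √u - a / √u) ((t / √u + a / (u * √u)) / 2) u := by
  have h := Real.hasDerivAt_sqrt hu.ne'
  have hs : 0 < √u := Real.sqrt_pos.2 hu
  have h2 := (h.const_mul t).sub ((hasDerivAt_const u a).div h hs.ne')
  refine HasDerivAt.congr_deriv h2 ?_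
  have : u = √u * √u := (Real.mul_self_sqrt hu.le).symm
  set r := √u
  rw [this]
  field_simp
  ring

lemma phi_image (t a : ℝ) (ht : 0 < t) (ha : 0 < a) :
    Set.image (fun u => t * √u - a / √u) (Ioi 0) = univ := by
  apply eq_univ_of_forall
  intro y
  set D := √(y ^ 2 + 4 * t * a) with hD
  have hD2 : D ^ 2 = y ^ 2 + 4 * t * a := Real.sq_sqrt (by positivity)
  have hDy : 0 < y + D := by
    have : |y| < D := by
      apply Real.lt_sqrt_of_sq_lt
      rw [sq_abs]; have := mul_pos ht ha; linarith
    have := neg_abs_le y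
    linarith
  have hr : 0 < (y + D) / (2 * t) := by positivity
  refine ⟨((y + D) / (2 * t)) ^ 2, by simpa using by positivity, ?_⟩
  simp only [Real.sqrt_sq hr.le]
  field_simp
  nlinarith

lemma phi_inj (t a : ℝ) (ht : 0 < t) (ha : 0 < a) :
    InjOn (fun u => t * √u - a / √u) (Ioi 0) := by
  apply StrictMonoOn.injOn
  intro x hx y hy hxy
  have hx : 0 < x := hx
  have h1 : 0 < √x := Real.sqrt_pos.2 hx
  have h2 : √x < √y := Real.sqrt_lt_sqrt hx.le hxy
  have h3 : a / √y < a / √x := by gcongr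
  have h4 : t * √x < t * √y := by gcongr
  simp only
  linarith

lemma phi_sq (t a u : ℝ) (hu : 0 < u) :
    Real.exp (-(t * √u - a / √u) ^ 2) = Real.exp (2 * a * t) * Real.exp (-(t ^ 2 * u + a ^ 2 / u)) := by
  rw [← Real.exp_add]
  congr 1
  have hs : 0 < √u := Real.sqrt_pos.2 hu
  have : u = √u * √u := (Real.mul_self_sqrt hu.le).symm
  set r := √u
  rw [this]
  field_simp
  ring

/-- the exponential weight -/
def wgt (t a u : ℝ) : ℝ := Real.exp (-(t ^ 2 * u + a ^ 2 / u))

lemma sum_aux (t a : ℝ) (ht : 0 < t) (ha : 0 < a) :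
    IntegrableOn (fun u => (t / √u + a / (u * √u)) * wgt t a u) (Ioi 0) ∧
    ∫ u in Ioi 0, (t / √u + a / (u * √u)) * wgt t a u = 2 * √Real.pi * Real.exp (-(2 * a * t)) := by
  have hd : ∀ u ∈ Ioi (0:ℝ), HasDerivWithinAt (fun u => t * √u - a / √u)
      ((t / √u + a / (u * √u)) / 2) (Ioi 0) u :=
    fun u hu => (phi_deriv t a u hu).hasDerivWithinAt
  have e1 := integral_image_eq_integral_abs_deriv_smul measurableSet_Ioi hd (phi_inj t a ht ha)
    (fun v => Real.exp (-v ^ 2))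
  have e2 := integrableOn_image_iff_integrableOn_abs_deriv_smul measurableSet_Ioi hd
    (phi_inj t a ht ha) (fun v => Real.exp (-v ^ 2))
  rw [phi_image t a ht ha] at e1 e2
  have hE : EqOn (fun u => |(t / √u + a / (u * √u)) / 2| • Real.exp (-(t * √u - a / √u) ^ 2))
     (fun u => (Real.exp (2 * a * t) / 2) * ((t / √u + a / (u * √u)) * wgt t a u)) (Ioi 0) := by
    intro u hu
    have hu : 0 < u := hu
    simp only [smul_eq_mul, wgt]
    rw [phi_sq t a u hu, abs_of_pos (by positivity)]
    ring
  rw [setIntegral_congr_fun measurableSet_Ioi hE, integral_const_mul, setIntegral_univ] at e1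
  rw [integrableOn_congr_fun hE measurableSet_Ioi] at e2
  have hg : ∫ v : ℝ, Real.exp (-v ^ 2) = √Real.pi := by simpa using integral_gaussian 1
  have hgi : Integrable (fun v : ℝ => Real.exp (-v ^ 2)) := by
    simpa using integrable_exp_neg_mul_sq (one_pos)
  constructor
  · have := (e2.1 hgi.integrableOn).const_mul (Real.exp (2 * a * t) / 2)⁻¹
    refine this.congr (Eventually.of_forall fun u => ?_)
    simp only
    rw [inv_mul_cancel_left₀ (by positivity)]
  · rw [hg] at e1
    rw [e1, Real.exp_neg]
    field_simp

lemma wgt_meas (t a : ℝ) : Measurable (wgt t a) := by unfold wgt; fun_prop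

lemma bes_int (t a : ℝ) (ht : 0 < t) (ha : 0 < a) :
    IntegrableOn (fun u => (1 / √u) * wgt t a u) (Ioi 0) ∧
    IntegrableOn (fun u => (1 / (u * √u)) * wgt t a u) (Ioi 0) := by
  have hm := wgt_meas t a
  have h := (sum_aux t a ht ha).1
  constructor
  · refine (h.const_mul (1 / t)).mono' (by fun_prop) ?_
    filter_upwards [ae_restrict_mem measurableSet_Ioi] with u hu
    have hu : 0 < u := hu
    have : 0 < wgt t a u := Real.exp_pos _
    rw [Real.norm_of_nonneg (by positivity)]
    have : 1 / t * ((t / √u + a / (u * √u)) * wgt t a u) = 1 / √u * wgt t a u + 1 / t * (a / (u * √u)) * wgt t a u := by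
      field_simp
    rw [this]
    have : 0 ≤ 1 / t * (a / (u * √u)) * wgt t a u := by positivity
    linarith
  · refine (h.const_mul (1 / a)).mono' (by fun_prop) ?_
    filter_upwards [ae_restrict_mem measurableSet_Ioi] with u hu
    have hu : 0 < u := hu
    have : 0 < wgt t a u := Real.exp_pos _
    rw [Real.norm_of_nonneg (by positivity)]
    have : 1 / a * ((t / √u + a / (u * √u)) * wgt t a u) = 1 / (u * √u) * wgt t a u + 1 / a * (t / √u) * wgt t a u := by
      field_simp; ring
    rw [this]
    have : 0 ≤ 1 / a * (t / √u) * wgt t a u := by positivity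
    linarith

lemma inv_aux (t a : ℝ) (ht : 0 < t) (ha : 0 < a) :
    ∫ u in Ioi 0, (1 / √u) * wgt t a u = (a / t) * ∫ u in Ioi 0, (1 / (u * √u)) * wgt t a u := by
  set c := (a / t) ^ 2 with hc
  have hcp : 0 < c := by positivity
  have hd : ∀ u ∈ Ioi (0:ℝ), HasDerivWithinAt (fun u => c / u) (-c / u ^ 2) (Ioi 0) u := by
    intro u hu
    have hu : 0 < u := hu
    have := ((hasDerivAt_const u c).div (hasDerivAt_id u) hu.ne')
    exact (this.congr_deriv (by simp)).hasDerivWithinAt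
  have hinj : InjOn (fun u => c / u) (Ioi 0) := by
    intro x hx y hy hxy
    have hx : 0 < x := hx
    have hy : 0 < y := hy
    field_simp at hxy
    exact hxy.symm
  have him : Set.image (fun u => c / u) (Ioi 0) = Ioi 0 := by
    ext y
    constructor
    · rintro ⟨x, hx, rfl⟩
      have hx : 0 < x := hx
      exact div_pos hcp hx
    · intro hy
      have hy : 0 < y := hy
      exact ⟨c / y, div_pos hcp hy, by field_simp⟩
  have e1 := integral_image_eq_integral_abs_deriv_smul measurableSet_Ioi hd hinj
    (fun u => (1 / √u) * wgt t a u)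
  rw [him] at e1
  rw [e1, ← integral_const_mul]
  refine setIntegral_congr_fun measurableSet_Ioi ?_
  intro u hu
  have hu : 0 < u := hu
  have hw : wgt t a (c / u) = wgt t a u := by
    unfold wgt
    congr 2
    rw [hc]
    field_simp
    ring
  simp only [smul_eq_mul, hw]
  rw [abs_of_neg (by rw [neg_div]; simp; positivity), Real.sqrt_div hcp.le, hc, Real.sqrt_sq (by positivity)]
  have hs : 0 < √u := Real.sqrt_pos.2 hu
  have : u = √u * √u := (Real.mul_self_sqrt hu.le).symm
  generalize wgt t a u = W
  set r := √u
  rw [this]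
  field_simp

lemma bes (t a : ℝ) (ht : 0 < t) (ha : 0 < a) :
    ∫ u in Ioi 0, (1 / √u) * wgt t a u = √Real.pi / t * Real.exp (-(2 * a * t)) ∧
    ∫ u in Ioi 0, (1 / (u * √u)) * wgt t a u = √Real.pi / a * Real.exp (-(2 * a * t)) := by
  obtain ⟨i1, i2⟩ := bes_int t a ht ha
  have h := (sum_aux t a ht ha).2
  have h3 := inv_aux t a ht ha
  have h4 : ∫ u in Ioi 0, (t / √u + a / (u * √u)) * wgt t a u =
      t * (∫ u in Ioi 0, (1 / √u) * wgt t a u) + a * ∫ u in Ioi 0, (1 / (u * √u)) * wgt t a u := by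
    rw [← integral_const_mul, ← integral_const_mul, ← integral_add (i1.const_mul t) (i2.const_mul a)]
    congr 1; ext u; ring
  rw [h4, h3] at h
  have hB : ∫ u in Ioi 0, (1 / (u * √u)) * wgt t a u = √Real.pi / a * Real.exp (-(2 * a * t)) := by
    field_simp at h ⊢
    linarith
  refine ⟨?_, hB⟩
  rw [h3, hB]
  field_simp

open scoped FourierTransform in
lemma ftR_eq (d : ℕ) (g : Ed d → ℝ) (ξ : Ed d) : ftR d g ξ = 𝓕 (fun x => (g x : ℂ)) ξ := by
  rw [Real.fourier_eq']
  unfold ftR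
  congr 1
  ext x
  rw [real_inner_comm, smul_eq_mul]

lemma gauss_integrable (d : ℕ) (u : ℝ) (hu : 0 < u) :
    Integrable (fun x : Ed d => (1 + ‖x‖ ^ 2) * Real.exp (-u * ‖x‖ ^ 2)) := by
  have h0 : Integrable (fun x : Ed d => Real.exp (-(u / 2) * ‖x‖ ^ 2)) := by
    have := (GaussianFourier.integrable_cexp_neg_mul_sq_norm_add (V := Ed d) (b := ((u / 2 : ℝ) : ℂ))
      (by simpa using hu) 0 0).norm
    refine this.congr (Eventually.of_forall fun x => ?_)
    simp only [Complex.norm_exp]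
    congr 1
    rw [zero_mul, add_zero, ← Complex.ofReal_neg, ← Complex.ofReal_pow, ← Complex.ofReal_mul, Complex.ofReal_re]
  refine (h0.const_mul (1 + 2 / u)).mono' (by fun_prop) (Eventually.of_forall fun x => ?_)
  rw [Real.norm_of_nonneg (by positivity)]
  have h1 : u / 2 * ‖x‖ ^ 2 + 1 ≤ Real.exp (u / 2 * ‖x‖ ^ 2) := Real.add_one_le_exp _
  have h2 : 1 + ‖x‖ ^ 2 ≤ (1 + 2 / u) * Real.exp (u / 2 * ‖x‖ ^ 2) := by
    calc 1 + ‖x‖ ^ 2 ≤ (1 + 2 / u) * (u / 2 * ‖x‖ ^ 2 + 1) := by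
          have : (1 + 2 / u) * (u / 2 * ‖x‖ ^ 2 + 1) = 1 + ‖x‖ ^ 2 + (2 / u + u / 2 * ‖x‖ ^ 2) := by
            field_simp; ring
          rw [this]
          have : 0 ≤ (2 / u + u / 2 * ‖x‖ ^ 2) := by positivity
          linarith
      _ ≤ _ := by gcongr
  calc _ ≤ ((1 + 2 / u) * Real.exp (u / 2 * ‖x‖ ^ 2)) * Real.exp (-u * ‖x‖ ^ 2) := by gcongr
    _ = _ := by
      rw [mul_assoc, ← Real.exp_add]; congr 2; ring

lemma gauss_norm (d : ℕ) (u : ℝ) (x : Ed d) :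
    ‖Complex.exp (-(u : ℂ) * (‖x‖ : ℂ) ^ 2)‖ = Real.exp (-u * ‖x‖ ^ 2) := by
  rw [Complex.norm_exp]
  congr 1
  rw [← Complex.ofReal_neg, ← Complex.ofReal_pow, ← Complex.ofReal_mul, Complex.ofReal_re]

lemma gauss_mul_integrable (d : ℕ) (u : ℝ) (hu : 0 < u) (P : Ed d → ℂ) (hP : Continuous P)
    (hb : ∀ x, ‖P x‖ ≤ 1 + ‖x‖ ^ 2) :
    Integrable (fun x : Ed d => P x * Complex.exp (-(u : ℂ) * (‖x‖ : ℂ) ^ 2)) := by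
  refine (gauss_integrable d u hu).mono' (by fun_prop) (Eventually.of_forall fun x => ?_)
  rw [norm_mul, gauss_norm]
  gcongr
  exact hb x

lemma coord_le (d : ℕ) (x : Ed d) (k : Fin d) : ‖x k‖ ≤ ‖x‖ := PiLp.norm_apply_le x k

open scoped FourierTransform in
lemma ft_coord (d : ℕ) (g : Ed d → ℂ) (hg : Integrable g)
    (hg' : Integrable (fun x => ‖x‖ * ‖g x‖)) (ξ : Ed d) (k : Fin d) (D : ℂ)
    (hD : HasDerivAt (fun s : ℝ => 𝓕 g (ξ + s • EuclideanSpace.single k 1)) D 0) :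
    𝓕 (fun x => (x k : ℂ) * g x) ξ = Complex.I / (2 * Real.pi) * D := by
  have h := Real.hasFDerivAt_fourier hg hg' ξ
  have hl : HasDerivAt (fun s : ℝ => ξ + s • (EuclideanSpace.single k 1 : Ed d))
      (EuclideanSpace.single k 1 : Ed d) 0 := by
    simpa using ((hasDerivAt_id (0:ℝ)).smul_const (EuclideanSpace.single k 1 : Ed d)).const_add ξ
  have h' : HasFDerivAt (𝓕 g) (𝓕 (VectorFourier.fourierSMulRight (innerSL ℝ) g) ξ)
      (ξ + (0:ℝ) • (EuclideanSpace.single k 1 : Ed d)) := by simpa using h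
  have h2 := h'.comp_hasDerivAt (0:ℝ) hl
  have h3 := hD.unique h2
  have hi : Integrable (VectorFourier.fourierSMulRight (innerSL ℝ) g) := by
    refine (hg'.const_mul (2 * Real.pi)).mono' hg.1.fourierSMulRight (Eventually.of_forall fun x => ?_)
    rw [VectorFourier.norm_fourierSMulRight, innerSL_apply_norm, mul_assoc]
  rw [Real.fourier_continuousLinearMap_apply hi] at h3
  have h4 : (fun x => VectorFourier.fourierSMulRight (innerSL ℝ) g x (EuclideanSpace.single k 1 : Ed d))
      = fun x => (-(2 * Real.pi * Complex.I)) • ((x k : ℂ) * g x) := by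
    ext x
    have hin : ((innerSL ℝ) x) (EuclideanSpace.single k 1 : Ed d) = x k := by
      rw [innerSL_apply_apply, EuclideanSpace.inner_single_right]; simp
    rw [VectorFourier.fourierSMulRight_apply, hin]
    simp
  rw [h4] at h3
  rw [h3]
  rw [Real.fourier_eq, Real.fourier_eq]
  simp_rw [smul_comm _ (-(2 * Real.pi * Complex.I))]
  rw [integral_smul, smul_eq_mul]
  have : (Real.pi : ℂ) ≠ 0 := by exact_mod_cast Real.pi_ne_zero
  field_simp
  simp

/-- the Fourier transform of the Gaussian -/
def gft (d : ℕ) (u : ℝ) (ξ : Ed d) : ℂ :=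
  ((((Real.pi / u) ^ ((d : ℝ) / 2)) * Real.exp (-(Real.pi ^ 2 * ‖ξ‖ ^ 2 / u)) : ℝ) : ℂ)

open scoped FourierTransform in
lemma ft_gauss (d : ℕ) (u : ℝ) (hu : 0 < u) (ξ : Ed d) :
    𝓕 (fun x : Ed d => Complex.exp (-(u : ℂ) * (‖x‖ : ℂ) ^ 2)) ξ = gft d u ξ := by
  rw [fourier_gaussian_innerProductSpace (by simpa using hu)]
  unfold gft
  push_cast
  rw [Complex.ofReal_cpow (by positivity)]
  push_cast
  congr 2
  · simp
  · ring

lemma gft_deriv (d : ℕ) (u : ℝ) (ξ : Ed d) (k : Fin d) :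
    HasDerivAt (fun s : ℝ => gft d u (ξ + s • EuclideanSpace.single k 1))
      ((-(2 * Real.pi ^ 2 * ξ k / u) : ℝ) * gft d u ξ) 0 := by
  have hn : ∀ s : ℝ, ‖ξ + s • (EuclideanSpace.single k 1 : Ed d)‖ ^ 2 = ‖ξ‖ ^ 2 + 2 * s * ξ k + s ^ 2 := by
    intro s
    rw [norm_add_sq_real, inner_smul_right, EuclideanSpace.inner_single_right, norm_smul]
    simp
    ring
  have h1 : HasDerivAt (fun s : ℝ => ‖ξ‖ ^ 2 + 2 * s * ξ k + s ^ 2) (2 * ξ k) 0 := by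
    have ha : HasDerivAt (fun s : ℝ => 2 * s * ξ k) (2 * ξ k) 0 := by
      simpa using ((hasDerivAt_id (0:ℝ)).const_mul 2).mul_const (ξ k)
    have hb : HasDerivAt (fun s : ℝ => s ^ 2) 0 0 := by
      simpa using hasDerivAt_pow 2 (0:ℝ)
    exact ((ha.const_add (‖ξ‖ ^ 2)).add hb).congr_deriv (by simp)
  have h2 := (((((h1.const_mul (Real.pi ^ 2)).div_const u).neg).exp).const_mul
    ((Real.pi / u) ^ ((d : ℝ) / 2))).ofReal_comp
  unfold gft
  simp_rw [hn]
  refine h2.congr_deriv ?_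
  rw [← Complex.ofReal_mul]
  congr 1
  simp
  ring

open scoped FourierTransform in
lemma ft_gauss1 (d : ℕ) (u : ℝ) (hu : 0 < u) (ξ : Ed d) (k : Fin d) :
    𝓕 (fun x : Ed d => (x k : ℂ) * Complex.exp (-(u : ℂ) * (‖x‖ : ℂ) ^ 2)) ξ =
      -Complex.I * ((Real.pi * ξ k / u : ℝ) : ℂ) * gft d u ξ := by
  have h1 : Integrable (fun x : Ed d => Complex.exp (-(u : ℂ) * (‖x‖ : ℂ) ^ 2)) := by
    simpa using gauss_mul_integrable d u hu (fun _ => 1) continuous_const (by intro x; simp)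
  have h2 : Integrable (fun x : Ed d => ‖x‖ * ‖Complex.exp (-(u : ℂ) * (‖x‖ : ℂ) ^ 2)‖) := by
    refine (gauss_mul_integrable d u hu (fun x => (‖x‖ : ℂ)) (by fun_prop) ?_).norm.congr
      (Eventually.of_forall fun x => by simp)
    intro x
    simp only [Complex.norm_real, norm_norm]
    nlinarith [sq_nonneg (‖x‖ - 1), norm_nonneg x]
  have hf : 𝓕 (fun x : Ed d => Complex.exp (-(u : ℂ) * (‖x‖ : ℂ) ^ 2)) = gft d u :=
    funext fun ξ => ft_gauss d u hu ξ
  rw [ft_coord d _ h1 h2 ξ k _ (by rw [hf]; exact gft_deriv d u ξ k)]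
  push_cast
  have : (Real.pi : ℂ) ≠ 0 := by exact_mod_cast Real.pi_ne_zero
  have : (u : ℂ) ≠ 0 := by exact_mod_cast hu.ne'
  field_simp

open scoped FourierTransform in
lemma ft_gauss2 (d : ℕ) (u : ℝ) (hu : 0 < u) (ξ : Ed d) (j k : Fin d) :
    𝓕 (fun x : Ed d => (x j : ℂ) * (x k : ℂ) * Complex.exp (-(u : ℂ) * (‖x‖ : ℂ) ^ 2)) ξ =
      (((if k = j then 1 else 0) / (2 * u) - Real.pi ^ 2 * ξ j * ξ k / u ^ 2 : ℝ) : ℂ) * gft d u ξ := by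
  have h1 : Integrable (fun x : Ed d => (x k : ℂ) * Complex.exp (-(u : ℂ) * (‖x‖ : ℂ) ^ 2)) := by
    refine gauss_mul_integrable d u hu (fun x => (x k : ℂ)) (by fun_prop) ?_
    intro x
    have := coord_le d x k
    simp only [Complex.norm_real]
    nlinarith [sq_nonneg (‖x‖ - 1), norm_nonneg x]
  have h2 : Integrable (fun x : Ed d => ‖x‖ * ‖(x k : ℂ) * Complex.exp (-(u : ℂ) * (‖x‖ : ℂ) ^ 2)‖) := by
    refine (gauss_mul_integrable d u hu (fun x => (‖x‖ : ℂ) * (x k : ℂ)) (by fun_prop) ?_).norm.congr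
      (Eventually.of_forall fun x => by simp [mul_assoc])
    intro x
    have := coord_le d x k
    simp only [norm_mul, Complex.norm_real, norm_norm]
    nlinarith [norm_nonneg x]
  have hf : 𝓕 (fun x : Ed d => (x k : ℂ) * Complex.exp (-(u : ℂ) * (‖x‖ : ℂ) ^ 2)) = fun ξ =>
      (-Complex.I * ((Real.pi / u : ℝ) : ℂ)) * (((ξ k : ℝ) : ℂ) * gft d u ξ) :=
    funext fun ξ => by rw [ft_gauss1 d u hu ξ]; push_cast; ring
  have hl : HasDerivAt (fun s : ℝ => (((ξ + s • (EuclideanSpace.single j 1 : Ed d)) k : ℝ) : ℂ))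
      ((if k = j then 1 else 0 : ℝ) : ℂ) 0 := by
    apply HasDerivAt.ofReal_comp
    simpa [PiLp.single_apply] using ((hasDerivAt_id (0:ℝ)).mul_const (if k = j then (1:ℝ) else 0)).const_add (ξ k)
  have hD := (hl.mul (gft_deriv d u ξ j)).const_mul (-Complex.I * ((Real.pi / u : ℝ) : ℂ))
  have := ft_coord d _ h1 h2 ξ j _ (by rw [hf]; exact hD)
  simp_rw [mul_assoc] at this ⊢
  rw [this]
  have : (Real.pi : ℂ) ≠ 0 := by exact_mod_cast Real.pi_ne_zero
  have : (u : ℂ) ≠ 0 := by exact_mod_cast hu.ne'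
  simp only [zero_smul, add_zero]
  have hI : Complex.I ^ 2 = -1 := Complex.I_sq
  generalize (if k = j then (1:ℝ) else 0) = δ
  push_cast
  field_simp
  rw [hI]
  ring

lemma kernel_integrable (d : ℕ) (t : ℝ) (ht : 0 < t) (P : Ed d → ℂ) (hP : Continuous P)
    (hb : ∀ x, ‖P x‖ ≤ ‖x‖ ^ 2 + t ^ 2) :
    Integrable (fun x : Ed d => P x * (((‖x‖ ^ 2 + t ^ 2) ^ (-(((d : ℝ) + 3) / 2)) : ℝ) : ℂ)) := by
  have h0 : Integrable (fun x : Ed d => ((1 : ℝ) + ‖x‖ ^ 2) ^ (-((d : ℝ) + 1) / 2)) :=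
    integrable_rpow_neg_one_add_norm_sq (by simp)
  set m := min 1 (t ^ 2) with hm
  have hmp : 0 < m := lt_min one_pos (by positivity)
  have hc : Continuous (fun x : Ed d => (‖x‖ ^ 2 + t ^ 2) ^ (-(((d : ℝ) + 3) / 2))) := by
    refine Continuous.rpow_const (by fun_prop) fun x => Or.inl (by positivity)
  refine (h0.const_mul (m ^ (-((d : ℝ) + 1) / 2))).mono' (by fun_prop) (Eventually.of_forall fun x => ?_)
  rw [norm_mul, Complex.norm_real, Real.norm_of_nonneg (by positivity)]
  calc _ ≤ (‖x‖ ^ 2 + t ^ 2) * (‖x‖ ^ 2 + t ^ 2) ^ (-(((d : ℝ) + 3) / 2)) := by gcongr; exact hb x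
    _ = (‖x‖ ^ 2 + t ^ 2) ^ (-((d : ℝ) + 1) / 2) := by
      rw [← Real.rpow_one_add' (by positivity)]
      · congr 1; ring
      · have : (0:ℝ) ≤ d := Nat.cast_nonneg d
        intro h; linarith
    _ ≤ (m * (1 + ‖x‖ ^ 2)) ^ (-((d : ℝ) + 1) / 2) := by
      apply Real.rpow_le_rpow_of_nonpos (by positivity)
      · have h1 : m ≤ 1 := min_le_left _ _
        have h2 : m ≤ t ^ 2 := min_le_right _ _
        nlinarith [sq_nonneg ‖x‖]
      · have : (0:ℝ) ≤ d := Nat.cast_nonneg d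
        linarith
    _ = _ := by rw [Real.mul_rpow hmp.le (by positivity)]

open scoped FourierTransform in
lemma kernel_ft (d : ℕ) (t : ℝ) (ht : 0 < t) (P : Ed d → ℂ) (hP : Continuous P)
    (hb : ∀ x, ‖P x‖ ≤ ‖x‖ ^ 2 + t ^ 2) (ξ : Ed d) :
    (Real.Gamma (((d : ℝ) + 3) / 2) : ℂ) *
      𝓕 (fun x : Ed d => P x * (((‖x‖ ^ 2 + t ^ 2) ^ (-(((d : ℝ) + 3) / 2)) : ℝ) : ℂ)) ξ =
    ∫ u in Ioi (0:ℝ), ((u ^ (((d : ℝ) + 3) / 2 - 1) * Real.exp (-(t ^ 2 * u)) : ℝ) : ℂ) *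
      𝓕 (fun x : Ed d => P x * Complex.exp (-(u : ℂ) * (‖x‖ : ℂ) ^ 2)) ξ := by
  set s : ℝ := ((d : ℝ) + 3) / 2 with hs
  have hsp : 0 < s := by positivity
  have hG : 0 < Real.Gamma s := Real.Gamma_pos_of_pos hsp
  have hki := kernel_integrable d t ht P hP hb
  -- the kernel in the u variable
  have hq : ∀ x : Ed d, 0 < ‖x‖ ^ 2 + t ^ 2 := fun x => by positivity
  have hgam : ∀ x : Ed d, ∫ u in Ioi (0:ℝ), u ^ (s - 1) * Real.exp (-((‖x‖ ^ 2 + t ^ 2) * u)) =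
      Real.Gamma s * (‖x‖ ^ 2 + t ^ 2) ^ (-s) := by
    intro x
    rw [Real.integral_rpow_mul_exp_neg_mul_Ioi hsp (hq x), one_div, Real.inv_rpow (hq x).le,
      Real.rpow_neg (hq x).le, mul_comm]
  have hgami : ∀ x : Ed d, IntegrableOn (fun u : ℝ => u ^ (s - 1) * Real.exp (-((‖x‖ ^ 2 + t ^ 2) * u))) (Ioi 0) := by
    intro x
    apply Integrable.of_integral_ne_zero
    rw [hgam x]
    have := hq x
    positivity
  let Φ : Ed d → ℝ → ℂ := fun x u => (Complex.exp (((-2 * Real.pi * (inner ℝ x ξ : ℝ) : ℝ) : ℂ) * Complex.I) * P x) *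
    ((u ^ (s - 1) * Real.exp (-((‖x‖ ^ 2 + t ^ 2) * u)) : ℝ) : ℂ)
  have hΦn : ∀ x, ∀ u ∈ Ioi (0:ℝ), ‖Φ x u‖ = ‖P x‖ * (u ^ (s - 1) * Real.exp (-((‖x‖ ^ 2 + t ^ 2) * u))) := by
    intro x u hu
    have hu : 0 < u := hu
    simp only [Φ]
    rw [norm_mul, norm_mul, Complex.norm_exp_ofReal_mul_I, one_mul, Complex.norm_real,
      Real.norm_of_nonneg (by positivity)]
  have hΦm : AEStronglyMeasurable (Function.uncurry Φ) (volume.prod (volume.restrict (Ioi (0:ℝ)))) := by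
    apply Measurable.aestronglyMeasurable
    have := hP.measurable
    simp only [Φ, Function.uncurry_def]
    fun_prop
  have hΦi : Integrable (Function.uncurry Φ) (volume.prod (volume.restrict (Ioi (0:ℝ)))) := by
    rw [integrable_prod_iff hΦm]
    constructor
    · refine Eventually.of_forall fun x => ?_
      exact ((hgami x).ofReal (𝕜 := ℂ)).const_mul
        (Complex.exp (((-2 * Real.pi * (inner ℝ x ξ : ℝ) : ℝ) : ℂ) * Complex.I) * P x)
    · refine (hki.norm.const_mul (Real.Gamma s)).congr (Eventually.of_forall fun x => ?_)
      simp only [Function.uncurry_apply_pair]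
      rw [setIntegral_congr_fun measurableSet_Ioi (hΦn x), integral_const_mul, hgam x, norm_mul,
        Complex.norm_real, Real.norm_of_nonneg (by have := hq x; positivity)]
      ring
  have hsw := integral_integral_swap hΦi
  rw [Real.fourier_eq', ← integral_const_mul]
  trans ∫ x, ∫ u in Ioi (0:ℝ), Φ x u
  · congr 1; ext x
    simp only [Φ]
    rw [integral_const_mul, integral_complex_ofReal, hgam x, smul_eq_mul]
    push_cast
    ring
  · rw [hsw]
    refine setIntegral_congr_fun measurableSet_Ioi fun u hu => ?_
    simp only [Φ]
    rw [Real.fourier_eq', ← integral_const_mul]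
    congr 1; ext x
    rw [smul_eq_mul]
    have : Real.exp (-((‖x‖ ^ 2 + t ^ 2) * u)) = Real.exp (-(t ^ 2 * u)) * Real.exp (-u * ‖x‖ ^ 2) := by
      rw [← Real.exp_add]; congr 1; ring
    rw [this]
    push_cast
    ring

lemma weight_gft (d : ℕ) (t u : ℝ) (hu : 0 < u) (ξ : Ed d) :
    ((u ^ (((d : ℝ) + 3) / 2 - 1) * Real.exp (-(t ^ 2 * u)) : ℝ) : ℂ) * gft d u ξ =
     ((Real.pi ^ ((d : ℝ) / 2) * √u * wgt t (Real.pi * ‖ξ‖) u : ℝ) : ℂ) := by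
  unfold gft wgt
  rw [← Complex.ofReal_mul]
  congr 1
  rw [neg_add, Real.exp_add, Real.div_rpow Real.pi_pos.le hu.le]
  have h1 : u ^ (((d : ℝ) + 3) / 2 - 1) = u ^ ((d : ℝ) / 2) * √u := by
    rw [Real.sqrt_eq_rpow, ← Real.rpow_add hu]; congr 1; ring
  rw [h1, mul_pow]
  have : 0 < u ^ ((d : ℝ) / 2) := by positivity
  field_simp

open scoped FourierTransform in
lemma kernel_ft1 (d : ℕ) (t : ℝ) (ht : 0 < t) (ξ : Ed d) (hξ : ξ ≠ 0) (k : Fin d) :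
    𝓕 (fun x : Ed d => ((pEntry d t (Fin.last d) k.castSucc x : ℝ) : ℂ)) ξ =
      -2 * Real.pi * Complex.I * t * (Real.exp (-(2 * Real.pi * ‖ξ‖ * t)) : ℝ) * (ξ k : ℝ) ∧
    Integrable (fun x : Ed d => ((pEntry d t (Fin.last d) k.castSucc x : ℝ) : ℂ)) := by
  have hn : 0 < ‖ξ‖ := norm_pos_iff.2 hξ
  have hP : Continuous (fun x : Ed d => (t : ℂ) * (x k : ℂ)) := by fun_prop
  have hb : ∀ x : Ed d, ‖(t : ℂ) * (x k : ℂ)‖ ≤ ‖x‖ ^ 2 + t ^ 2 := by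
    intro x
    have := coord_le d x k
    rw [norm_mul, Complex.norm_real, Complex.norm_real, Real.norm_of_nonneg ht.le]
    nlinarith [sq_nonneg (t - ‖x‖), norm_nonneg x, sq_nonneg t]
  have he : (fun x : Ed d => ((pEntry d t (Fin.last d) k.castSucc x : ℝ) : ℂ)) = fun x =>
      ((2 * ((d : ℝ) + 1) / sphereVol d * t : ℝ) : ℂ) •
      ((t : ℂ) * (x k : ℂ) * (((‖x‖ ^ 2 + t ^ 2) ^ (-(((d : ℝ) + 3) / 2)) : ℝ) : ℂ)) := by
    ext x
    have : 0 < ‖x‖ ^ 2 + t ^ 2 := by positivity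
    unfold pEntry snocVec
    rw [Fin.snoc_last, Fin.snoc_castSucc, Real.rpow_neg this.le]
    simp only [smul_eq_mul]
    push_cast
    ring
  have hki := kernel_integrable d t ht _ hP hb
  refine ⟨?_, by rw [he]; exact hki.smul ((2 * ((d : ℝ) + 1) / sphereVol d * t : ℝ) : ℂ)⟩
  have hG : Real.Gamma (((d : ℝ) + 3) / 2) ≠ 0 := (Real.Gamma_pos_of_pos (by positivity)).ne'
  have hGC : (Real.Gamma (((d : ℝ) + 3) / 2) : ℂ) ≠ 0 := by exact_mod_cast hG
  have key := kernel_ft d t ht _ hP hb ξ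
  have hI : ∫ u in Ioi (0:ℝ), ((u ^ (((d : ℝ) + 3) / 2 - 1) * Real.exp (-(t ^ 2 * u)) : ℝ) : ℂ) *
      𝓕 (fun x : Ed d => (t : ℂ) * (x k : ℂ) * Complex.exp (-(u : ℂ) * (‖x‖ : ℂ) ^ 2)) ξ =
      ∫ u in Ioi (0:ℝ), (-Complex.I * ((t * Real.pi * ξ k * Real.pi ^ ((d : ℝ) / 2) : ℝ) : ℂ)) *
        (((1 / √u) * wgt t (Real.pi * ‖ξ‖) u : ℝ) : ℂ) := by
    refine setIntegral_congr_fun measurableSet_Ioi fun u hu => ?_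
    have hu : 0 < u := hu
    simp only
    have h1 : 𝓕 (fun x : Ed d => (t : ℂ) * (x k : ℂ) * Complex.exp (-(u : ℂ) * (‖x‖ : ℂ) ^ 2)) ξ =
        (t : ℂ) * (-Complex.I * ((Real.pi * ξ k / u : ℝ) : ℂ) * gft d u ξ) := by
      rw [← ft_gauss1 d u hu, Real.fourier_eq, Real.fourier_eq, ← integral_const_mul]
      congr 1; ext x
      rw [mul_smul_comm, mul_assoc]
    rw [h1]
    have h2 := weight_gft d t u hu ξ
    have h3 : (1 / √u) = √u / u := by
      rw [one_div, ← Real.sqrt_div_self]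
    rw [h3]
    calc _ = (t : ℂ) * -Complex.I * ((Real.pi * ξ k / u : ℝ) : ℂ) *
          (((u ^ (((d : ℝ) + 3) / 2 - 1) * Real.exp (-(t ^ 2 * u)) : ℝ) : ℂ) * gft d u ξ) := by ring
      _ = _ := by rw [h2]; push_cast; ring
  rw [hI, integral_const_mul, integral_complex_ofReal, (bes t (Real.pi * ‖ξ‖) ht (by positivity)).1] at key
  have hS := sphereVol_mul_Gamma d
  have hS0 : sphereVol d ≠ 0 := by
    intro h; rw [h, zero_mul] at hS
    have : 0 < ((d : ℝ) + 1) * (Real.pi ^ ((d : ℝ) / 2) * √Real.pi) := by positivity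
    linarith
  rw [he, Real.fourier_eq]
  simp_rw [smul_comm _ ((2 * ((d : ℝ) + 1) / sphereVol d * t : ℝ) : ℂ)]
  rw [integral_smul, ← Real.fourier_eq]
  have key2 := eq_div_of_mul_eq hGC ((mul_comm _ _).trans key)
  rw [key2, smul_eq_mul]
  have hfin : (2 * ((d : ℝ) + 1) / sphereVol d * t) * ((t * Real.pi * ξ k * Real.pi ^ ((d : ℝ) / 2)) *
     (√Real.pi / t * Real.exp (-(2 * (Real.pi * ‖ξ‖) * t))) / Real.Gamma (((d : ℝ) + 3) / 2)) =
     2 * Real.pi * t * Real.exp (-(2 * Real.pi * ‖ξ‖ * t)) * ξ k := by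
    rw [← mul_assoc 2 Real.pi ‖ξ‖]
    field_simp
    linear_combination (-(ξ k)) * hS
  have hfinC := congrArg (fun r : ℝ => -Complex.I * (r : ℂ)) hfin
  simp only at hfinC
  push_cast at hfinC ⊢
  linear_combination hfinC

open scoped FourierTransform in
lemma kernel_ft2 (d : ℕ) (t : ℝ) (ht : 0 < t) (ξ : Ed d) (hξ : ξ ≠ 0) (j k : Fin d) :
    𝓕 (fun x : Ed d => ((pEntry d t j.castSucc k.castSucc x : ℝ) : ℂ)) ξ =
      ((Real.exp (-(2 * Real.pi * ‖ξ‖ * t)) * (if k = j then 1 else 0) -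
        2 * Real.pi * t * Real.exp (-(2 * Real.pi * ‖ξ‖ * t)) * ξ j * ξ k / ‖ξ‖ : ℝ) : ℂ) ∧
    Integrable (fun x : Ed d => ((pEntry d t j.castSucc k.castSucc x : ℝ) : ℂ)) := by
  have hn : 0 < ‖ξ‖ := norm_pos_iff.2 hξ
  have hP : Continuous (fun x : Ed d => (x j : ℂ) * (x k : ℂ)) := by fun_prop
  have hb : ∀ x : Ed d, ‖(x j : ℂ) * (x k : ℂ)‖ ≤ ‖x‖ ^ 2 + t ^ 2 := by
    intro x
    rw [norm_mul, Complex.norm_real, Complex.norm_real]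
    have := mul_le_mul (coord_le d x j) (coord_le d x k) (norm_nonneg _) (norm_nonneg _)
    nlinarith [sq_nonneg t]
  have he : (fun x : Ed d => ((pEntry d t j.castSucc k.castSucc x : ℝ) : ℂ)) = fun x =>
      ((2 * ((d : ℝ) + 1) / sphereVol d * t : ℝ) : ℂ) •
      ((x j : ℂ) * (x k : ℂ) * (((‖x‖ ^ 2 + t ^ 2) ^ (-(((d : ℝ) + 3) / 2)) : ℝ) : ℂ)) := by
    ext x
    have : 0 < ‖x‖ ^ 2 + t ^ 2 := by positivity
    unfold pEntry snocVec
    rw [Fin.snoc_castSucc, Fin.snoc_castSucc, Real.rpow_neg this.le]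
    simp only [smul_eq_mul]
    push_cast
    ring
  have hki := kernel_integrable d t ht _ hP hb
  refine ⟨?_, by rw [he]; exact hki.smul ((2 * ((d : ℝ) + 1) / sphereVol d * t : ℝ) : ℂ)⟩
  have hG : Real.Gamma (((d : ℝ) + 3) / 2) ≠ 0 := (Real.Gamma_pos_of_pos (by positivity)).ne'
  have hGC : (Real.Gamma (((d : ℝ) + 3) / 2) : ℂ) ≠ 0 := by exact_mod_cast hG
  have key := kernel_ft d t ht _ hP hb ξ
  have hI : ∫ u in Ioi (0:ℝ), ((u ^ (((d : ℝ) + 3) / 2 - 1) * Real.exp (-(t ^ 2 * u)) : ℝ) : ℂ) *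
      𝓕 (fun x : Ed d => (x j : ℂ) * (x k : ℂ) * Complex.exp (-(u : ℂ) * (‖x‖ : ℂ) ^ 2)) ξ =
      ∫ u in Ioi (0:ℝ), (((Real.pi ^ ((d : ℝ) / 2) * (if k = j then 1 else 0) / 2) * ((1 / √u) * wgt t (Real.pi * ‖ξ‖) u) -
        (Real.pi ^ ((d : ℝ) / 2) * (Real.pi ^ 2 * ξ j * ξ k)) * ((1 / (u * √u)) * wgt t (Real.pi * ‖ξ‖) u) : ℝ) : ℂ) := by
    refine setIntegral_congr_fun measurableSet_Ioi fun u hu => ?_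
    have hu : 0 < u := hu
    simp only
    rw [ft_gauss2 d u hu, mul_left_comm, weight_gft d t u hu ξ, ← Complex.ofReal_mul]
    congr 1
    generalize wgt t (Real.pi * ‖ξ‖) u = W
    generalize (if k = j then (1:ℝ) else 0) = δ
    have hs : 0 < √u := Real.sqrt_pos.2 hu
    have : u = √u * √u := (Real.mul_self_sqrt hu.le).symm
    set r := √u
    rw [this]
    field_simp
  have ha : 0 < Real.pi * ‖ξ‖ := by positivity
  rw [hI, integral_complex_ofReal, integral_sub ((bes_int t _ ht ha).1.const_mul _)
    ((bes_int t _ ht ha).2.const_mul _), integral_const_mul, integral_const_mul,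
    (bes t _ ht ha).1, (bes t _ ht ha).2] at key
  have hS := sphereVol_mul_Gamma d
  have hS0 : sphereVol d ≠ 0 := by
    intro h; rw [h, zero_mul] at hS
    have : 0 < ((d : ℝ) + 1) * (Real.pi ^ ((d : ℝ) / 2) * √Real.pi) := by positivity
    linarith
  rw [he, Real.fourier_eq]
  simp_rw [smul_comm _ ((2 * ((d : ℝ) + 1) / sphereVol d * t : ℝ) : ℂ)]
  rw [integral_smul, ← Real.fourier_eq]
  have key2 := eq_div_of_mul_eq hGC ((mul_comm _ _).trans key)
  rw [key2, smul_eq_mul, ← Complex.ofReal_div, ← Complex.ofReal_mul]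
  congr 1
  generalize (if k = j then (1:ℝ) else 0) = δ
  rw [← mul_assoc 2 Real.pi ‖ξ‖]
  have hc : 2 * ((d : ℝ) + 1) / sphereVol d * t = 2 * t * Real.Gamma (((d : ℝ) + 3) / 2) /
      (Real.pi ^ ((d : ℝ) / 2) * √Real.pi) := by
    field_simp
    linear_combination (-1:ℝ) * hS
  rw [hc]
  field_simp

open scoped FourierTransform in
lemma conv_ft (d : ℕ) (t : ℝ) (i : Fin (d + 1))
    (hK : ∀ k : Fin d, Integrable (fun x : Ed d => ((pEntry d t i k.castSucc x : ℝ) : ℂ)))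
    (f : SchwartzMap (Ed d) (Ed d)) (ξ : Ed d) :
    ftR d (fun x => pConv d t (appendZero d (fun y => f y)) x i) ξ =
      ∑ k : Fin d, 𝓕 (fun x : Ed d => ((pEntry d t i k.castSucc x : ℝ) : ℂ)) ξ * ftR d (fun x => f x k) ξ := by
  have hf : ∀ k : Fin d, Integrable (fun x : Ed d => ((f x k : ℝ) : ℂ)) := by
    intro k
    refine f.integrable.norm.mono' (by fun_prop) (Eventually.of_forall fun x => ?_)
    rw [Complex.norm_real]
    exact coord_le d (f x) k
  have hbd : ∀ k : Fin d, ∃ C, ∀ x, ‖((f x k : ℝ) : ℂ)‖ ≤ C := by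
    intro k
    obtain ⟨C, hC⟩ := f.decay 0 0
    refine ⟨C, fun x => ?_⟩
    rw [Complex.norm_real]
    have := hC.2 x
    simp at this
    exact (coord_le d (f x) k).trans this
  have hI : ∀ (k : Fin d) (x : Ed d), Integrable (fun y : Ed d =>
      ((pEntry d t i k.castSucc y : ℝ) : ℂ) * ((f (x - y) k : ℝ) : ℂ)) := by
    intro k x
    obtain ⟨C, hC⟩ := hbd k
    exact (hK k).mul_bdd (c := C) (by fun_prop) (Eventually.of_forall fun y => hC _)
  have hc : ∀ x, ((pConv d t (appendZero d (fun y => f y)) x i : ℝ) : ℂ) =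
      ∑ k : Fin d, ∫ y, ((pEntry d t i k.castSucc y : ℝ) : ℂ) * ((f (x - y) k : ℝ) : ℂ) := by
    intro x
    rw [← integral_finsetSum _ (fun k _ => hI k x)]
    have : pConv d t (appendZero d (fun y => f y)) x i =
      ∫ y, ∑ k : Fin d, pEntry d t i k.castSucc y * f (x - y) k := by
      simp [pConv, appendZero, Fin.sum_univ_castSucc]
    rw [this, ← integral_complex_ofReal]
    push_cast
    rfl
  have hcv : ∀ k : Fin d, Integrable (fun x => ∫ y, ((pEntry d t i k.castSucc y : ℝ) : ℂ) * ((f (x - y) k : ℝ) : ℂ)) :=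
    fun k => (hK k).integrable_convolution (ContinuousLinearMap.mul ℂ ℂ) (hf k)
  rw [ftR_eq]
  simp_rw [hc]
  rw [Real.fourier_eq]
  simp_rw [Finset.smul_sum]
  rw [integral_finsetSum _ (fun k _ => (Real.fourierIntegral_convergent_iff ξ).2 (hcv k))]
  refine Finset.sum_congr rfl fun k _ => ?_
  rw [ftR_eq, ← Real.fourier_mul_convolution_eq (hK k) (hf k)]
  rfl

/-- **Fourier transform of the Poisson-type integral.** If `f` is a Schwartz vector field,
`F = (f,0)` and `U(·,t) = ℙ_t ∗ F`, then for `t > 0` and `ξ ≠ 0`: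
(i) for `j = 1,…,d`,
`ℱ_x(U_j(·,t))(ξ) = e^{−2π|ξ|t} ℱ(f_j)(ξ) − 2πt e^{−2π|ξ|t} ξ_j (ξ·ℱ(f)(ξ))/|ξ|`, and
(ii) `ℱ_x(U_{d+1}(·,t))(ξ) = −2πi t e^{−2π|ξ|t} (ξ·ℱ(f)(ξ))`. -/
theorem pConv_fourier_transform (d : ℕ)
    (f : SchwartzMap (Ed d) (Ed d)) (t : ℝ) (ht : 0 < t) (ξ : Ed d) (hξ : ξ ≠ 0) :
    (∀ j : Fin d,
      ftR d (fun x => pConv d t (appendZero d (fun y => f y)) x j.castSucc) ξ =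
        ((Real.exp (-(2 * Real.pi * ‖ξ‖ * t)) : ℝ) : ℂ) * ftR d (fun x => f x j) ξ -
          ((2 * Real.pi * t * Real.exp (-(2 * Real.pi * ‖ξ‖ * t)) : ℝ) : ℂ) *
            ((ξ j : ℝ) : ℂ) *
            ((∑ k : Fin d, ((ξ k : ℝ) : ℂ) * ftR d (fun x => f x k) ξ) / ((‖ξ‖ : ℝ) : ℂ))) ∧
    ftR d (fun x => pConv d t (appendZero d (fun y => f y)) x (Fin.last d)) ξ =
      -2 * Real.pi * Complex.I * (t : ℂ) *
        ((Real.exp (-(2 * Real.pi * ‖ξ‖ * t)) : ℝ) : ℂ) *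
        (∑ k : Fin d, ((ξ k : ℝ) : ℂ) * ftR d (fun x => f x k) ξ) := by
  have hξ' : ((‖ξ‖ : ℝ) : ℂ) ≠ 0 := by exact_mod_cast (norm_pos_iff.2 hξ).ne'
  constructor
  · intro j
    rw [conv_ft d t _ (fun k => (kernel_ft2 d t ht ξ hξ j k).2) f ξ]
    simp_rw [fun k => (kernel_ft2 d t ht ξ hξ j k).1]
    simp only [Complex.ofReal_sub, sub_mul, Finset.sum_sub_distrib]
    congr 1
    · rw [Finset.sum_eq_single j]
      · simp
      · intro k _ hk; simp [hk]
      · intro h; simp at h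
    · rw [Finset.sum_div, Finset.mul_sum]
      refine Finset.sum_congr rfl fun k _ => ?_
      push_cast
      ring
  · rw [conv_ft d t _ (fun k => (kernel_ft1 d t ht ξ hξ k).2) f ξ]
    simp_rw [fun k => (kernel_ft1 d t ht ξ hξ k).1]
    rw [Finset.mul_sum]
    refine Finset.sum_congr rfl fun k _ => ?_
    ring
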